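/- Let (X_n)_{n∈ℕ} be an increasing sequence (X_n ⊆ X_{n+1}) of closed, nowhere dense subsets of [0,1], and define h : [0,1] → ℝ by h(x) = 2^{−n} if n is the least index with x ∈ X_n, and h(x) = 0 if x ∉ ⋃_{n∈ℕ} X_n. Then h is its own oscillation function: osc_h(x) = h(x) for every x ∈ [0,1]. -/

import Mathlib

open Set Filter Topology
open scoped Classical

/-- The function `h` of the paper: `h(x) = 2^(-n)` if `n` is the least index with
`x ∈ X n`, and `h(x) = 0` if `x` belongs to no `X n`. -/
noncomputable def hFun (X : ℕ → Set ℝ) (x : ℝ) : ℝ :=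
  if hx : ∃ n, x ∈ X n then (2:ℝ) ^ (-(Nat.find hx : ℤ)) else 0

/-- The oscillation of `f` at `x`, relative to the domain `[0,1]`:
the limit as `δ → 0⁺` (equivalently, the infimum over `δ > 0`) of
`sup f([0,1] ∩ [x-δ,x+δ]) - inf f([0,1] ∩ [x-δ,x+δ])`. -/
noncomputable def osc (f : ℝ → ℝ) (x : ℝ) : ℝ :=
  ⨅ δ : {d : ℝ // 0 < d},
    (sSup (f '' (Set.Icc 0 1 ∩ Set.Icc (x - δ.1) (x + δ.1))) -
     sInf (f '' (Set.Icc 0 1 ∩ Set.Icc (x - δ.1) (x + δ.1))))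

lemma hFun_nonneg (X : ℕ → Set ℝ) (x : ℝ) : 0 ≤ hFun X x := by
  unfold hFun
  split_ifs
  · positivity
  · exact le_rfl

lemma hFun_le_one (X : ℕ → Set ℝ) (x : ℝ) : hFun X x ≤ 1 := by
  unfold hFun
  split_ifs with h
  · rw [zpow_neg, zpow_natCast]
    exact inv_le_one_of_one_le₀ (one_le_pow₀ (by norm_num))
  · exact zero_le_one

lemma hFun_le_of_notMem (X : ℕ → Set ℝ) (hmono : ∀ n, X n ⊆ X (n + 1)) (n : ℕ) (y : ℝ)
    (hy : y ∉ X n) : hFun X y ≤ ((2:ℝ) ^ (n + 1))⁻¹ := by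
  unfold hFun
  split_ifs with h
  · rw [zpow_neg, zpow_natCast]
    have hm : Monotone X := monotone_nat_of_le_succ hmono
    have h1 : n < Nat.find h := by
      by_contra hc
      exact hy (hm (not_lt.mp hc) (Nat.find_spec h))
    exact inv_anti₀ (by positivity) (pow_le_pow_right₀ (by norm_num) h1)
  · positivity

lemma exists_inv_pow_lt (ε : ℝ) (hε : 0 < ε) : ∃ n : ℕ, ((2:ℝ) ^ (n + 1))⁻¹ < ε := by
  obtain ⟨n, hn⟩ := exists_pow_lt_of_lt_one hε (by norm_num : (1/2:ℝ) < 1)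
  refine ⟨n, lt_of_le_of_lt ?_ hn⟩
  rw [one_div, inv_pow]
  exact inv_anti₀ (by positivity) (pow_le_pow_right₀ (by norm_num) (Nat.le_succ n))

lemma exists_delta_notMem (S : Set ℝ) (hS : IsClosed S) (x : ℝ) (hx : x ∉ S) :
    ∃ δ > 0, ∀ y ∈ Set.Icc (x - δ) (x + δ), y ∉ S := by
  obtain ⟨δ, h0, h⟩ := Metric.nhds_basis_closedBall.mem_iff.mp (hS.isOpen_compl.mem_nhds hx)
  rw [Real.closedBall_eq_Icc] at h
  exact ⟨δ, h0, fun y hy => h hy⟩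

lemma hFun_usc (X : ℕ → Set ℝ) (hcl : ∀ n, IsClosed (X n)) (hmono : ∀ n, X n ⊆ X (n + 1))
    (x ε : ℝ) (hε : 0 < ε) :
    ∃ δ > 0, ∀ y ∈ Set.Icc (x - δ) (x + δ), hFun X y ≤ hFun X x + ε := by
  by_cases h : ∃ n, x ∈ X n
  · have hval : hFun X x = ((2:ℝ) ^ (Nat.find h))⁻¹ := by
      unfold hFun
      rw [dif_pos h, zpow_neg, zpow_natCast]
    rcases hk : Nat.find h with _ | k
    · refine ⟨1, one_pos, fun y _ => ?_⟩
      have := hFun_le_one X y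
      rw [hval, hk]
      norm_num
      linarith
    · obtain ⟨δ, h0, hδ⟩ := exists_delta_notMem (X k) (hcl k) x
        (Nat.find_min h (by omega))
      refine ⟨δ, h0, fun y hy => ?_⟩
      have := hFun_le_of_notMem X hmono k y (hδ y hy)
      rw [hval, hk]
      linarith
  · obtain ⟨n, hn⟩ := exists_inv_pow_lt ε hε
    obtain ⟨δ, h0, hδ⟩ := exists_delta_notMem (X n) (hcl n) x (fun hx => h ⟨n, hx⟩)
    refine ⟨δ, h0, fun y hy => ?_⟩
    have := hFun_le_of_notMem X hmono n y (hδ y hy)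
    have := hFun_nonneg X x
    linarith

/-- for an increasing sequence of closed, nowhere dense subsets of `[0,1]`
(nowhere dense: dense in no nonempty open subinterval of `[0,1]`), the function `h` is
its own oscillation function: `osc_h(x) = h(x)` for every `x ∈ [0,1]`. -/
theorem hFun_eq_own_oscillation (X : ℕ → Set ℝ)
    (hcl : ∀ n, IsClosed (X n)) (hsub : ∀ n, X n ⊆ Set.Icc 0 1)
    (hmono : ∀ n, X n ⊆ X (n + 1))
    (hnd : ∀ n, ∀ a b : ℝ, 0 ≤ a → a < b → b ≤ 1 → ¬ (Set.Ioo a b ⊆ closure (X n))) :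
    ∀ x ∈ Set.Icc (0:ℝ) 1, osc (hFun X) x = hFun X x := by
  intro x hx
  have hmem : ∀ δ : ℝ, 0 < δ →
      hFun X x ∈ hFun X '' (Set.Icc 0 1 ∩ Set.Icc (x - δ) (x + δ)) := fun δ h0 =>
    ⟨x, ⟨hx, by constructor <;> linarith⟩, rfl⟩
  have hinf : ∀ δ : ℝ, 0 < δ →
      sInf (hFun X '' (Set.Icc 0 1 ∩ Set.Icc (x - δ) (x + δ))) = 0 := by
    intro δ h0
    apply le_antisymm
    · refine le_of_forall_pos_le_add fun ε hε => ?_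
      obtain ⟨n, hn⟩ := exists_inv_pow_lt ε hε
      have hab : max 0 (x - δ) < min 1 (x + δ) := by
        rcases hx with ⟨h1, h2⟩
        refine max_lt (lt_min ?_ ?_) (lt_min ?_ ?_) <;> linarith
      obtain ⟨y, hy, hyn⟩ := Set.not_subset.mp
        (hnd n _ _ (le_max_left 0 (x - δ)) hab (min_le_left 1 (x + δ)))
      have hyX : y ∉ X n := fun h => hyn (subset_closure h)
      have hle := hFun_le_of_notMem X hmono n y hyX
      obtain ⟨h1, h2⟩ := max_lt_iff.mp hy.1
      obtain ⟨h3, h4⟩ := lt_min_iff.mp hy.2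
      have : sInf (hFun X '' (Set.Icc 0 1 ∩ Set.Icc (x - δ) (x + δ))) ≤ hFun X y := by
        refine csInf_le ⟨0, ?_⟩ ⟨y, ⟨⟨h1.le, h3.le⟩, ⟨h2.le, h4.le⟩⟩, rfl⟩
        rintro _ ⟨z, _, rfl⟩
        exact hFun_nonneg X z
      linarith
    · refine le_csInf ⟨_, hmem δ h0⟩ ?_
      rintro _ ⟨z, _, rfl⟩
      exact hFun_nonneg X z
  have hge : ∀ δ : {d : ℝ // 0 < d}, hFun X x ≤
      sSup (hFun X '' (Set.Icc 0 1 ∩ Set.Icc (x - δ.1) (x + δ.1))) -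
      sInf (hFun X '' (Set.Icc 0 1 ∩ Set.Icc (x - δ.1) (x + δ.1))) := by
    intro δ
    rw [hinf δ.1 δ.2, sub_zero]
    refine le_csSup ⟨1, ?_⟩ (hmem δ.1 δ.2)
    rintro _ ⟨z, _, rfl⟩
    exact hFun_le_one X z
  unfold osc
  haveI : Nonempty {d : ℝ // 0 < d} := ⟨⟨1, one_pos⟩⟩
  apply le_antisymm
  · refine le_of_forall_pos_le_add fun ε hε => ?_
    obtain ⟨δ, h0, hδ⟩ := hFun_usc X hcl hmono x ε hε
    refine (ciInf_le ⟨hFun X x, ?_⟩ (⟨δ, h0⟩ : {d : ℝ // 0 < d})).trans ?_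
    · rintro _ ⟨d, rfl⟩
      exact hge d
    · dsimp only
      rw [hinf δ h0, sub_zero]
      refine csSup_le ⟨_, hmem δ h0⟩ ?_
      rintro _ ⟨z, hz, rfl⟩
      exact hδ z hz.2
  · exact le_ciInf hge
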